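/- Let β ∈ (0,1/2) and let f be the 2π-periodic extension of u ↦ |u|^{2β} from [−π,π). Then there exist constants C > 0 and δ ∈ (0,π) such that for all u with 0 < |u| < δ, |(K_∞ f)(u) + 2β tan(πβ) · |u|^{2β−1}| ≤ C; that is, (K_∞ f)(u) = −2β tan(πβ) |u|^{2β−1} + O(1) as u → 0. -/

import Mathlib

open Real MeasureTheory Filter Set Asymptotics

/-- Principal value (at `u`) of the integral of `g` over `(-π, π)`. -/
noncomputable def pvInt (g : ℝ → ℝ) (u : ℝ) : ℝ :=
  limUnder (nhdsWithin (0:ℝ) (Set.Ioi 0))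
    (fun ε : ℝ => ∫ x in {x : ℝ | x ∈ Set.Ioo (-π) π ∧ ε < |x - u|}, g x)

/-- Periodic Hilbert transform of a `2π`-periodic function:
`ℋ(f)(u) = (1/π) Σ_{n ∈ ℤ} p.v.∫_{-π}^{π} f(x)/(x - u + 2πn) dx`. -/
noncomputable def periodicHilbert (f : ℝ → ℝ) (u : ℝ) : ℝ :=
  (1/π) * ∑' n : ℤ, pvInt (fun x => f x / (x - u + 2*π*(n : ℝ))) u

/-- The operator `K_∞ = -ℋ ∂ᵤ` acting via the a.e. derivative. -/
noncomputable def Kinf (f : ℝ → ℝ) (u : ℝ) : ℝ := - periodicHilbert (deriv f) u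

/-- The `2π`-periodic extension of `g : [-π, π) → ℝ`. -/
noncomputable def perExt (g : ℝ → ℝ) (x : ℝ) : ℝ :=
  g (x - 2*π*(⌊(x + π)/(2*π)⌋ : ℝ))

open scoped Topology

/-!
Since `K_∞ f = -ℋ(f')` and `f = |x| ^ a` near `u`, with `a = 2β`, everything is about the odd
function `f' = a |x| ^ (a - 2) x`. It has mean zero, so in the `n`-th term of the Hilbert transform,
`n ≠ 0`, the kernel may be replaced by its oscillation over a period, which is at most `1 / n ^ 2`;
these terms add up to `O(1)`. In the term `n = 0` the principal value is the integral of the slope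
`(f' x - f' u) / (x - u)` up to a logarithm that is small near `u = 0`. Folding this integral at `0`
and rescaling by `|u|` gives

  `2 a |u| ^ (a - 1) * ∫ t in 0..π / |u|, (t ^ a - 1) / (t ^ 2 - 1)`.

The tail of the last integral beyond `π / |u|` is `O(|u| ^ (1 - a))`, hence contributes `O(1)`. The
integral over `(0, ∞)` is `π / 2 * tan (π a / 2)`: the substitution `t ↦ 1 / t` on `(1, ∞)` and a
geometric expansion turn it into `∑ (1 / (2k + 1 - a) - 1 / (2k + 1 + a))`, which is the partial
fraction expansion of the tangent.
-/

/-! ### Odd functions and slopes -/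

section OddAndSlope

variable {E : Type*} [NormedAddCommGroup E] [NormedSpace ℝ E] {r : ℝ}

lemma odd_deriv_of_even {f : ℝ → ℝ} (hf : f.Even) : (deriv f).Odd := fun x ↦ by
  rw [← neg_eq_iff_eq_neg, ← deriv_comp_neg]
  simp only [hf _]

lemma integral_Ioo_neg_eq_integral_add_comp_neg {f : ℝ → E} (hr : 0 ≤ r)
    (hf : IntegrableOn f (Ioo (-r) r)) :
    ∫ x in Ioo (-r) r, f x = ∫ x in 0..r, (f x + f (-x)) := by
  have h_le : -r ≤ r := by linarith
  rw [← intervalIntegrable_iff_integrableOn_Ioo_of_le h_le] at hf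
  have h_left : IntervalIntegrable f volume (-r) 0 :=
    hf.mono_set (uIcc_subset_uIcc_left (by simp [hr]))
  have h_right : IntervalIntegrable f volume 0 r :=
    hf.mono_set (uIcc_subset_uIcc_right (by simp [hr]))
  have h_refl : IntervalIntegrable (fun x ↦ f (-x)) volume 0 r := by
    simpa using ((IntervalIntegrable.iff_comp_neg (f := f)).1 h_left).symm
  rw [intervalIntegral.integral_add h_right h_refl, intervalIntegral.integral_comp_neg, neg_zero,
    add_comm, intervalIntegral.integral_add_adjacent_intervals h_left h_right,
    intervalIntegral.integral_of_le h_le, integral_Ioc_eq_integral_Ioo]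

lemma intervalIntegral_neg_eq_zero_of_odd {f : ℝ → E} (hf : f.Odd) (r : ℝ) :
    ∫ x in -r..r, f x = 0 := by
  have h_refl := intervalIntegral.integral_comp_neg (a := -r) (b := r) f
  simp only [hf _, intervalIntegral.integral_neg, neg_neg] at h_refl
  have := IsAddTorsionFree.of_isTorsionFree ℝ E
  exact self_eq_neg.1 h_refl.symm

lemma slope_add_slope_neg_of_odd {f : ℝ → ℝ} (hf : f.Odd) {u x : ℝ} (hxu : |x| ≠ |u|) :
    slope f u x + slope f u (-x) = 2 * (x * f x - u * f u) / (x ^ 2 - u ^ 2) := by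
  have h_sub : x - u ≠ 0 := fun h ↦ hxu (by rw [sub_eq_zero.1 h])
  have h_add : -x - u ≠ 0 := fun h ↦ hxu (by rw [← sub_eq_zero.1 h, abs_neg])
  have h_sq : x ^ 2 - u ^ 2 ≠ 0 := sub_ne_zero.2 fun h ↦ hxu ((sq_eq_sq_iff_abs_eq_abs x u).1 h)
  rw [slope_def_field, slope_def_field, hf x, div_add_div _ _ h_sub h_add,
    div_eq_div_iff (mul_ne_zero h_sub h_add) h_sq]
  ring

lemma integrableOn_slope {μ : Measure ℝ} {f : ℝ → E} {s : Set ℝ} {u : ℝ} (hs : μ s ≠ ⊤)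
    (hf : IntegrableOn f s μ) (hfu : DifferentiableAt ℝ f u) : IntegrableOn (slope f u) s μ := by
  obtain ⟨M, hM⟩ := hfu.isBigO_sub.bound
  obtain ⟨η, hη, h_near⟩ := Metric.eventually_nhds_iff.1 hM
  have h_diff : IntegrableOn (fun x ↦ f x - f u) s μ := hf.sub (integrableOn_const hs)
  have h_dom : IntegrableOn (fun x ↦ |M| + ‖f x - f u‖ / η) s μ :=
    (integrableOn_const hs).add (h_diff.norm.div_const η)
  refine Integrable.mono' h_dom ?_ (.of_forall fun x ↦ ?_)
  · exact (measurable_id.sub_const u).inv.aestronglyMeasurable.smul h_diff.aestronglyMeasurable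
  have h_slope : ‖slope f u x‖ = ‖f x - f u‖ / ‖x - u‖ := by
    rw [slope, vsub_eq_sub, norm_smul, norm_inv, inv_mul_eq_div]
  rw [h_slope]
  rcases lt_or_ge ‖x - u‖ η with hx | hx
  · have h_le : ‖f x - f u‖ / ‖x - u‖ ≤ |M| := by
      refine div_le_of_le_mul₀ (norm_nonneg _) (abs_nonneg _) ((h_near hx).trans ?_)
      gcongr
      exact le_abs_self M
    exact h_le.trans (le_add_of_nonneg_right (by positivity))
  · have h_le : ‖f x - f u‖ / ‖x - u‖ ≤ ‖f x - f u‖ / η := by gcongr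
    exact h_le.trans (le_add_of_nonneg_left (abs_nonneg M))

end OddAndSlope

/-! ### The partial fraction expansion of the tangent -/

lemma complex_cot_two_mul (z : ℂ) :
    Complex.cot (2 * z) = (Complex.cot z - Complex.tan z) / 2 := by
  rw [Complex.cot_eq_cos_div_sin, Complex.cot_eq_cos_div_sin, Complex.tan_eq_sin_div_cos,
    Complex.sin_two_mul, Complex.cos_two_mul']
  rcases eq_or_ne (Complex.sin z) 0 with hs | hs
  · simp [hs]
  rcases eq_or_ne (Complex.cos z) 0 with hc | hc
  · simp [hc]
  field_simp

lemma div_two_mem_integerComplement {z : ℂ} (hz : z ∈ Complex.integerComplement) :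
    z / 2 ∈ Complex.integerComplement := by
  rw [Complex.mem_integerComplement_iff] at hz ⊢
  rintro ⟨n, hn⟩
  exact hz ⟨2 * n, by push_cast; rw [hn]; ring⟩

lemma hasSum_cotTerm {z : ℂ} (hz : z ∈ Complex.integerComplement) :
    HasSum (cotTerm z) (π * Complex.cot (π * z) - 1 / z) := by
  rw [cot_series_rep' hz]
  exact (summable_cotTerm hz).hasSum

lemma complex_hasSum_tan {z : ℂ} (hz : z ∈ Complex.integerComplement) :
    HasSum (fun k : ℕ ↦ 1 / (2 * (k : ℂ) + 1 - z) - 1 / (2 * (k : ℂ) + 1 + z))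
      (π / 2 * Complex.tan (π * (z / 2))) := by
  have h_total := hasSum_cotTerm hz
  have h_odd : HasSum (fun k ↦ cotTerm z (2 * k + 1))
      ((π * Complex.cot (π * (z / 2)) - 1 / (z / 2)) / 2) := by
    refine ((hasSum_cotTerm (div_two_mem_integerComplement hz)).div_const 2).congr_fun fun k ↦ ?_
    rw [cotTerm, cotTerm, show z / 2 - (k + 1) = (z - (2 * k + 2)) / 2 by ring,
      show z / 2 + (k + 1) = (z + (2 * k + 2)) / 2 by ring, one_div_div, one_div_div]
    push_cast
    ring
  have h_even : Summable fun k ↦ cotTerm z (2 * k) :=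
    h_total.summable.comp_injective (mul_right_injective₀ two_ne_zero)
  have h_sum := (h_even.hasSum.even_add_odd h_odd).unique h_total
  have h_cot := complex_cot_two_mul (π * (z / 2))
  rw [show 2 * (π * (z / 2)) = π * z by ring] at h_cot
  have h_value : -∑' k, cotTerm z (2 * k) = π / 2 * Complex.tan (π * (z / 2)) := by
    rw [h_cot, one_div_div] at h_sum
    linear_combination -h_sum
  rw [← h_value]
  refine h_even.hasSum.neg.congr_fun fun k ↦ ?_
  rw [cotTerm, show z - ((2 * k : ℕ) + 1) = -((2 * k + 1) - z) by push_cast; ring,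
    one_div_neg_eq_neg_one_div]
  push_cast
  ring

lemma hasSum_tan {a : ℝ} (ha : a ∈ Ioo 0 1) :
    HasSum (fun k : ℕ ↦ 1 / (2 * (k : ℝ) + 1 - a) - 1 / (2 * (k : ℝ) + 1 + a))
      (π / 2 * tan (π * (a / 2))) := by
  have h_compl : (a : ℂ) ∈ Complex.integerComplement := by
    rw [Complex.mem_integerComplement_iff]
    rintro ⟨n, hn⟩
    have hn' : (n : ℝ) = a := mod_cast hn
    obtain ⟨h₀, h₁⟩ := hn' ▸ ha
    norm_cast at h₀ h₁
    omega
  rw [← Complex.hasSum_ofReal]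
  exact_mod_cast complex_hasSum_tan h_compl

/-! ### The folded kernel -/

/-- The kernel left over from the singular integral of `(f' x - f' u) / (x - u)` with `f = |x| ^ a`
after adding the values at `x` and `-x` and substituting `x = |u| t`. Its removable singularity at
`t = 1` carries the junk value `0`. -/
noncomputable def foldedKernel (a t : ℝ) : ℝ := (t ^ a - 1) / (t ^ 2 - 1)

section FoldedKernel

variable {a t T : ℝ}

lemma measurable_foldedKernel : Measurable (foldedKernel a) := by
  unfold foldedKernel
  fun_prop

lemma foldedKernel_nonneg (ha : 0 ≤ a) (ht : 0 ≤ t) : 0 ≤ foldedKernel a t := by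
  rcases le_total t 1 with h | h
  · exact div_nonneg_of_nonpos (sub_nonpos.2 (rpow_le_one ht h ha))
      (sub_nonpos.2 (pow_le_one₀ ht h))
  · exact div_nonneg (sub_nonneg.2 (one_le_rpow h ha)) (sub_nonneg.2 (one_le_pow₀ h))

lemma foldedKernel_le_one (ha : a ≤ 2) (ht : t ∈ Ioc 0 1) : foldedKernel a t ≤ 1 := by
  refine div_le_one_of_ge ?_ (sub_nonpos.2 (pow_le_one₀ ht.1.le ht.2))
  have := rpow_le_rpow_of_exponent_ge ht.1 ht.2 ha
  rw [rpow_two] at this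
  linarith

lemma foldedKernel_le_rpow (ha : a ≤ 2) (ht : 1 < t) : foldedKernel a t ≤ t ^ (a - 2) := by
  have h_pow : t ^ a = t ^ (a - 2) * t ^ 2 := by
    rw [← rpow_two, ← rpow_add (by positivity), sub_add_cancel]
  have h_le : t ^ (a - 2) ≤ 1 := rpow_le_one_of_one_le_of_nonpos ht.le (by linarith)
  rw [foldedKernel, div_le_iff₀ (sub_pos.2 (one_lt_pow₀ ht two_ne_zero)), h_pow]
  linarith

lemma integrableOn_foldedKernel_Ioi (ha : a ∈ Ico 0 1) (hT : 1 ≤ T) :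
    IntegrableOn (foldedKernel a) (Ioi T) := by
  have h_rpow : IntegrableOn (fun t : ℝ ↦ t ^ (a - 2)) (Ioi T) :=
    integrableOn_Ioi_rpow_of_lt (by linarith [ha.2]) (by linarith)
  refine h_rpow.mono' measurable_foldedKernel.aestronglyMeasurable
    (ae_restrict_of_forall_mem measurableSet_Ioi fun t (ht : T < t) ↦ ?_)
  rw [norm_of_nonneg (foldedKernel_nonneg ha.1 (by linarith))]
  exact foldedKernel_le_rpow (by linarith [ha.2]) (by linarith)

lemma integrableOn_foldedKernel (ha : a ∈ Ico 0 1) : IntegrableOn (foldedKernel a) (Ioi 0) := by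
  rw [← Ioc_union_Ioi_eq_Ioi zero_le_one]
  refine IntegrableOn.union ?_ (integrableOn_foldedKernel_Ioi ha le_rfl)
  refine Measure.integrableOn_of_bounded (M := 1) (by simp)
    measurable_foldedKernel.aestronglyMeasurable
    (ae_restrict_of_forall_mem measurableSet_Ioc fun t ht ↦ ?_)
  rw [norm_of_nonneg (foldedKernel_nonneg ha.1 ht.1.le)]
  exact foldedKernel_le_one (by linarith [ha.2]) ht

lemma integral_foldedKernel_Ioi_le (ha : a ∈ Ico 0 1) (hT : 1 ≤ T) :
    ∫ t in Ioi T, foldedKernel a t ≤ T ^ (a - 1) / (1 - a) := by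
  have h_exp : a - 2 < -1 := by linarith [ha.2]
  calc ∫ t in Ioi T, foldedKernel a t ≤ ∫ t in Ioi T, t ^ (a - 2) := by
        refine setIntegral_mono_on (integrableOn_foldedKernel_Ioi ha hT)
          (integrableOn_Ioi_rpow_of_lt h_exp (by linarith)) measurableSet_Ioi
          fun t (ht : T < t) ↦ foldedKernel_le_rpow (by linarith) (by linarith)
    _ = T ^ (a - 1) / (1 - a) := by
        rw [integral_Ioi_rpow_of_lt h_exp (by linarith), neg_div, ← div_neg]
        ring_nf

lemma integral_Ioi_zero_eq_integral_Ioo_add_inv {E : Type*} [NormedAddCommGroup E]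
    [NormedSpace ℝ E] {f : ℝ → E} (hf : IntegrableOn f (Ioi 0)) :
    ∫ t in Ioi 0, f t = ∫ t in Ioo 0 1, (f t + (t ^ 2)⁻¹ • f t⁻¹) := by
  have h_image : (·⁻¹) '' Ioo (0 : ℝ) 1 = Ioi 1 := by
    rw [image_inv_eq_inv, inv_Ioo_0_left one_pos, inv_one]
  have h_deriv (t : ℝ) (ht : t ∈ Ioo 0 1) :
      HasDerivWithinAt (·⁻¹) (-(t ^ 2)⁻¹) (Ioo 0 1) t :=
    hasDerivWithinAt_inv ht.1.ne' _
  have h_abs (t : ℝ) : |-(t ^ 2)⁻¹| = (t ^ 2)⁻¹ := by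
    rw [abs_neg, abs_of_nonneg (by positivity)]
  have h_tail : IntegrableOn f (Ioi 1) := hf.mono_set (Ioi_subset_Ioi zero_le_one)
  have h_tail_inv : IntegrableOn (fun t ↦ (t ^ 2)⁻¹ • f t⁻¹) (Ioo 0 1) := by
    simpa only [h_abs] using (integrableOn_image_iff_integrableOn_abs_deriv_smul measurableSet_Ioo
      h_deriv inv_injective.injOn f).1 (h_image ▸ h_tail)
  have h_integral : ∫ t in Ioi 1, f t = ∫ t in Ioo 0 1, (t ^ 2)⁻¹ • f t⁻¹ := by
    rw [← h_image, integral_image_eq_integral_abs_deriv_smul measurableSet_Ioo h_deriv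
      inv_injective.injOn]
    simp only [h_abs]
  rw [← Ioc_union_Ioi_eq_Ioi (zero_le_one' ℝ), setIntegral_union (Ioc_disjoint_Ioi le_rfl)
    measurableSet_Ioi (hf.mono_set Ioc_subset_Ioi_self) h_tail, h_integral,
    integral_Ioc_eq_integral_Ioo,
    integral_add (hf.mono_set Ioo_subset_Ioi_self) h_tail_inv]

lemma integrableOn_rpow_Ioo {r : ℝ} (hr : -1 < r) : IntegrableOn (fun t : ℝ ↦ t ^ r) (Ioo 0 1) :=
  (intervalIntegral.integrableOn_Ioo_rpow_iff one_pos).2 hr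

lemma setIntegral_rpow_Ioo_zero_one {r : ℝ} (hr : -1 < r) :
    ∫ t in Ioo (0 : ℝ) 1, t ^ r = 1 / (r + 1) := by
  rw [← integral_Ioc_eq_integral_Ioo, ← intervalIntegral.integral_of_le zero_le_one,
    integral_rpow (.inl hr), one_rpow, zero_rpow (by linarith), sub_zero]

lemma foldedKernel_add_inv_smul (ht : t ∈ Ioo 0 1) :
    foldedKernel a t + (t ^ 2)⁻¹ • foldedKernel a t⁻¹ = (t ^ (-a) - t ^ a) * (1 - t ^ 2)⁻¹ := by
  have h_sq : 1 - t ^ 2 ≠ 0 := (sub_pos.2 (pow_lt_one₀ ht.1.le ht.2 two_ne_zero)).ne'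
  have h_sq' : t ^ 2 - 1 ≠ 0 := by rwa [← neg_sub, neg_ne_zero]
  have ht0 := ht.1.ne'
  rw [foldedKernel, foldedKernel, inv_rpow ht.1.le, ← rpow_neg ht.1.le, smul_eq_mul]
  have h_inv_sq : (t⁻¹) ^ 2 - 1 = (1 - t ^ 2) / t ^ 2 := by field_simp
  rw [h_inv_sq]
  field_simp
  ring

lemma hasSum_rpow_sub_rpow (ht : t ∈ Ioo 0 1) :
    HasSum (fun k : ℕ ↦ t ^ (2 * (k : ℝ) - a) - t ^ (2 * (k : ℝ) + a))
      ((t ^ (-a) - t ^ a) * (1 - t ^ 2)⁻¹) := by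
  refine ((hasSum_geometric_of_lt_one (sq_nonneg t)
    (pow_lt_one₀ ht.1.le ht.2 two_ne_zero)).mul_left (t ^ (-a) - t ^ a)).congr_fun fun k ↦ ?_
  rw [sub_eq_add_neg (2 * (k : ℝ)), rpow_add ht.1, rpow_add ht.1, rpow_mul ht.1.le, rpow_natCast,
    rpow_two]
  ring

lemma integral_foldedKernel (ha : a ∈ Ioo 0 1) :
    ∫ t in Ioi 0, foldedKernel a t = π / 2 * tan (π * (a / 2)) := by
  set F : ℕ → ℝ → ℝ := fun k t ↦ t ^ (2 * (k : ℝ) - a) - t ^ (2 * (k : ℝ) + a)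
  have h_sub (k : ℕ) : -1 < 2 * (k : ℝ) - a := by linarith [ha.2, k.cast_nonneg (α := ℝ)]
  have h_add (k : ℕ) : -1 < 2 * (k : ℝ) + a := by linarith [ha.1, k.cast_nonneg (α := ℝ)]
  have h_int (k : ℕ) : IntegrableOn (F k) (Ioo 0 1) :=
    (integrableOn_rpow_Ioo (h_sub k)).sub (integrableOn_rpow_Ioo (h_add k))
  have h_value (k : ℕ) : ∫ t in Ioo 0 1, F k t =
      1 / (2 * (k : ℝ) + 1 - a) - 1 / (2 * (k : ℝ) + 1 + a) := by
    rw [integral_sub (integrableOn_rpow_Ioo (h_sub k)) (integrableOn_rpow_Ioo (h_add k)),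
      setIntegral_rpow_Ioo_zero_one (h_sub k), setIntegral_rpow_Ioo_zero_one (h_add k),
      sub_add_eq_add_sub, add_right_comm]
  have h_norm (k : ℕ) : ∫ t in Ioo 0 1, ‖F k t‖ = ∫ t in Ioo 0 1, F k t :=
    setIntegral_congr_fun measurableSet_Ioo fun t ht ↦ norm_of_nonneg <|
      sub_nonneg.2 (rpow_le_rpow_of_exponent_ge ht.1 ht.2.le (by linarith [ha.1]))
  have h_series := hasSum_tan ha
  have h_swap := hasSum_integral_of_summable_integral_norm h_int
    (by simpa only [h_norm, h_value] using h_series.summable)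
  rw [integral_Ioi_zero_eq_integral_Ioo_add_inv (integrableOn_foldedKernel ⟨ha.1.le, ha.2⟩)]
  calc ∫ t in Ioo 0 1, (foldedKernel a t + (t ^ 2)⁻¹ • foldedKernel a t⁻¹)
      = ∫ t in Ioo 0 1, ∑' k, F k t := setIntegral_congr_fun measurableSet_Ioo fun t ht ↦ by
        rw [(hasSum_rpow_sub_rpow ht).tsum_eq]
        exact foldedKernel_add_inv_smul ht
    _ = π / 2 * tan (π * (a / 2)) := by
        simp only [h_value] at h_swap
        exact h_swap.unique h_series

lemma abs_integral_foldedKernel_sub_le (ha : a ∈ Ioo 0 1) (hT : 1 ≤ T) :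
    |(∫ t in 0..T, foldedKernel a t) - π / 2 * tan (π * (a / 2))| ≤ T ^ (a - 1) / (1 - a) := by
  have ha' : a ∈ Ico 0 1 := ⟨ha.1.le, ha.2⟩
  have h_tail_nonneg : 0 ≤ ∫ t in Ioi T, foldedKernel a t :=
    setIntegral_nonneg measurableSet_Ioi fun t (ht : T < t) ↦
      foldedKernel_nonneg ha.1.le (by linarith)
  have h_split : (∫ t in 0..T, foldedKernel a t) + ∫ t in Ioi T, foldedKernel a t =
      π / 2 * tan (π * (a / 2)) := by
    rw [← integral_foldedKernel ha, intervalIntegral.integral_interval_add_Ioi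
      (integrableOn_foldedKernel ha') (integrableOn_foldedKernel_Ioi ha' hT)]
  rw [← h_split, sub_add_cancel_left, abs_neg, abs_of_nonneg h_tail_nonneg]
  exact integral_foldedKernel_Ioi_le ha' hT

end FoldedKernel

/-! ### Principal values -/

/-- The domain of integration of the truncated integral defining the principal value at `u`. -/
def pvDomain (u ε : ℝ) : Set ℝ := {x | x ∈ Ioo (-π) π ∧ ε < |x - u|}

/-- The principal value at `u` of the integral of `g` over `(-π, π)` exists and equals `L`. The
truncated integrals are required to be genuine integrals, which makes the notion additive in `g`. -/
structure HasPV (g : ℝ → ℝ) (u L : ℝ) : Prop where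
  integrableOn : ∀ ε > 0, IntegrableOn g (pvDomain u ε)
  tendsto : Tendsto (fun ε ↦ ∫ x in pvDomain u ε, g x) (𝓝[>] 0) (𝓝 L)

section PrincipalValue

variable {f g : ℝ → ℝ} {u L M : ℝ}

lemma pvDomain_eq_inter (u ε : ℝ) : pvDomain u ε = {x | ε < |x - u|} ∩ Ioo (-π) π :=
  inter_comm _ _

lemma measurableSet_lt_abs_sub (u ε : ℝ) : MeasurableSet {x : ℝ | ε < |x - u|} :=
  measurableSet_lt measurable_const (by fun_prop)

lemma measurableSet_pvDomain (u ε : ℝ) : MeasurableSet (pvDomain u ε) :=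
  measurableSet_Ioo.inter (measurableSet_lt_abs_sub u ε)

lemma volume_pvDomain_lt_top (u ε : ℝ) : volume (pvDomain u ε) < ⊤ :=
  (measure_mono inter_subset_left).trans_lt measure_Ioo_lt_top

lemma HasPV.pvInt_eq (h : HasPV g u L) : pvInt g u = L := h.tendsto.limUnder_eq

lemma HasPV.add (hf : HasPV f u L) (hg : HasPV g u M) :
    HasPV (fun x ↦ f x + g x) u (L + M) where
  integrableOn ε hε := (hf.integrableOn ε hε).add (hg.integrableOn ε hε)
  tendsto := (hf.tendsto.add hg.tendsto).congr' <| eventually_nhdsWithin_of_forall fun ε hε ↦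
    (integral_add (hf.integrableOn ε hε) (hg.integrableOn ε hε)).symm

lemma HasPV.const_mul (c : ℝ) (hg : HasPV g u L) : HasPV (fun x ↦ c * g x) u (c * L) where
  integrableOn ε hε := (hg.integrableOn ε hε).const_mul c
  tendsto := (hg.tendsto.const_mul c).congr fun _ ↦ (integral_const_mul c g).symm

lemma pvInt_congr (h : EqOn f g (Ioo (-π) π)) (u : ℝ) : pvInt f u = pvInt g u := by
  unfold pvInt
  congr 1 with ε
  exact setIntegral_congr_fun (measurableSet_pvDomain u ε) fun x hx ↦ h hx.1

lemma hasPV_of_integrableOn (hg : IntegrableOn g (Ioo (-π) π)) (u : ℝ) :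
    HasPV g u (∫ x in Ioo (-π) π, g x) where
  integrableOn ε _ := hg.mono_set inter_subset_left
  tendsto := by
    have h_cover : AECover (volume.restrict (Ioo (-π) π)) (𝓝[>] 0) fun ε ↦ {x | ε < |x - u|} := {
      ae_eventually_mem := by
        filter_upwards [ae_restrict_of_ae (Measure.ae_ne volume u)] with x hx
        exact eventually_nhdsWithin_of_eventually_nhds <|
          eventually_lt_nhds (abs_pos.2 (sub_ne_zero.2 hx))
      measurableSet := measurableSet_lt_abs_sub u }
    simpa only [Measure.restrict_restrict (measurableSet_lt_abs_sub u _), ← pvDomain_eq_inter] using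
      h_cover.integral_tendsto_of_countably_generated hg

lemma integrableOn_inv_sub_pvDomain (u : ℝ) {ε : ℝ} (hε : 0 < ε) :
    IntegrableOn (fun x ↦ (x - u)⁻¹) (pvDomain u ε) := by
  refine Measure.integrableOn_of_bounded (M := ε⁻¹) (volume_pvDomain_lt_top u ε).ne
    (measurable_id.sub_const u).inv.aestronglyMeasurable
    (ae_restrict_of_forall_mem (measurableSet_pvDomain u ε) fun x hx ↦ ?_)
  rw [norm_inv]
  exact inv_anti₀ hε hx.2.le

lemma integral_pvDomain_inv_sub {ε : ℝ} (hε : 0 < ε) (hεu : ε < π - |u|) :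
    ∫ x in pvDomain u ε, (x - u)⁻¹ = log ((π - u) / (π + u)) := by
  obtain ⟨h_left, h_right⟩ : -π < u - ε ∧ u + ε < π := by
    constructor <;> linarith [neg_abs_le u, le_abs_self u]
  have h_domain : pvDomain u ε = Ioo (-π) (u - ε) ∪ Ioo (u + ε) π := by
    ext x
    simp only [pvDomain, mem_ofPred_eq, mem_Ioo, mem_union, lt_abs]
    grind
  have h_disjoint : Disjoint (Ioo (-π) (u - ε)) (Ioo (u + ε) π) :=
    disjoint_left.2 fun x hx hx' ↦ by linarith [hx.2, hx'.1]
  have h_int := integrableOn_inv_sub_pvDomain u hε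
  have h_left_integral : ∫ x in Ioo (-π) (u - ε), (x - u)⁻¹ = log (ε / (π + u)) := by
    rw [← integral_Ioc_eq_integral_Ioo, ← intervalIntegral.integral_of_le h_left.le,
      intervalIntegral.integral_comp_sub_right fun x ↦ x⁻¹,
      integral_inv_of_neg (by linarith) (by linarith), ← neg_div_neg_eq]
    ring_nf
  have h_right_integral : ∫ x in Ioo (u + ε) π, (x - u)⁻¹ = log ((π - u) / ε) := by
    rw [← integral_Ioc_eq_integral_Ioo, ← intervalIntegral.integral_of_le h_right.le,
      intervalIntegral.integral_comp_sub_right fun x ↦ x⁻¹,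
      integral_inv_of_pos (by linarith) (by linarith), add_sub_cancel_left]
  have h_pos_sub : 0 < π - u := by linarith
  have h_pos_add : 0 < π + u := by linarith
  rw [h_domain] at h_int ⊢
  rw [setIntegral_union h_disjoint measurableSet_Ioo h_int.left_of_union h_int.right_of_union,
    h_left_integral, h_right_integral, ← log_mul (by positivity) (by positivity)]
  field_simp

lemma hasPV_inv_sub (hu : |u| < π) : HasPV (fun x ↦ (x - u)⁻¹) u (log ((π - u) / (π + u))) where
  integrableOn _ := integrableOn_inv_sub_pvDomain u
  tendsto := by
    refine tendsto_const_nhds.congr' ?_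
    filter_upwards [Ioo_mem_nhdsGT (sub_pos.2 hu)] with ε hε
    exact (integral_pvDomain_inv_sub hε.1 hε.2).symm

lemma pvInt_div_sub (hf : IntegrableOn f (Ioo (-π) π)) (hfu : DifferentiableAt ℝ f u)
    (hu : |u| < π) : pvInt (fun x ↦ f x / (x - u)) u =
      (∫ x in Ioo (-π) π, slope f u x) + f u * log ((π - u) / (π + u)) := by
  have h_slope := hasPV_of_integrableOn (integrableOn_slope measure_Ioo_lt_top.ne hf hfu) u
  rw [← (h_slope.add ((hasPV_inv_sub hu).const_mul (f u))).pvInt_eq]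
  congr 1 with x
  rw [slope_def_field, ← div_eq_mul_inv, ← add_div, sub_add_cancel]

/-! ### The periodic Hilbert transform -/

lemma abs_inv_sub_add_sub_inv_le {x : ℝ} {n : ℤ} (hx : |x| ≤ π) (hu : |u| ≤ π / 2) (hn : n ≠ 0) :
    |(x - u + 2 * π * n)⁻¹ - (2 * π * n - u)⁻¹| ≤ 1 / (n : ℝ) ^ 2 := by
  have hn_one : 1 ≤ |(n : ℝ)| := mod_cast Int.one_le_abs hn
  have h_period : |2 * π * (n : ℝ)| = 2 * π * |(n : ℝ)| := by
    rw [abs_mul, abs_of_pos two_pi_pos]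
  have h_shift : π * |(n : ℝ)| ≤ |2 * π * n - u| := by
    have := abs_sub_abs_le_abs_sub (2 * π * (n : ℝ)) u
    nlinarith [pi_pos]
  have h_shift_add : π / 2 * |(n : ℝ)| ≤ |x - u + 2 * π * n| := by
    have h_tri := abs_sub_abs_le_abs_sub (2 * π * (n : ℝ)) (u - x)
    rw [show 2 * π * (n : ℝ) - (u - x) = x - u + 2 * π * n by ring] at h_tri
    nlinarith [pi_pos, abs_sub u x]
  have h_ne : x - u + 2 * π * n ≠ 0 := abs_pos.1 (h_shift_add.trans_lt' (by positivity))
  have h_ne' : 2 * π * n - u ≠ 0 := abs_pos.1 (h_shift.trans_lt' (by positivity))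
  calc |(x - u + 2 * π * n)⁻¹ - (2 * π * n - u)⁻¹|
      = |x| / (|x - u + 2 * π * n| * |2 * π * n - u|) := by
        rw [inv_sub_inv h_ne h_ne', abs_div, abs_mul, ← abs_neg x]
        ring_nf
    _ ≤ π / (π / 2 * |(n : ℝ)| * (π * |(n : ℝ)|)) := by gcongr
    _ = 2 / π * (1 / (n : ℝ) ^ 2) := by
        rw [← sq_abs (n : ℝ)]
        field_simp
    _ ≤ 1 / (n : ℝ) ^ 2 :=
        mul_le_of_le_one_left (by positivity) ((div_le_one pi_pos).2 two_le_pi)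

lemma abs_pvInt_div_shift_le {n : ℤ} (hf : IntegrableOn f (Ioo (-π) π))
    (h_mean : ∫ x in Ioo (-π) π, f x = 0) (hu : |u| ≤ π / 2) (hn : n ≠ 0) :
    |pvInt (fun x ↦ f x / (x - u + 2 * π * n)) u| ≤
      1 / (n : ℝ) ^ 2 * ∫ x in Ioo (-π) π, |f x| := by
  set c := (2 * π * (n : ℝ) - u)⁻¹
  have h_bound (x : ℝ) (hx : x ∈ Ioo (-π) π) :
      ‖f x * ((x - u + 2 * π * n)⁻¹ - c)‖ ≤ 1 / (n : ℝ) ^ 2 * |f x| := by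
    rw [norm_mul, mul_comm]
    exact mul_le_mul_of_nonneg_right
      (abs_inv_sub_add_sub_inv_le (abs_le.2 ⟨hx.1.le, hx.2.le⟩) hu hn) (norm_nonneg _)
  have h_osc : IntegrableOn (fun x ↦ f x * ((x - u + 2 * π * n)⁻¹ - c)) (Ioo (-π) π) :=
    (hf.norm.const_mul _).mono'
      (hf.aestronglyMeasurable.mul (by fun_prop : Measurable _).aestronglyMeasurable)
      (ae_restrict_of_forall_mem measurableSet_Ioo h_bound)
  have h_split (x : ℝ) : f x / (x - u + 2 * π * n) =
      f x * ((x - u + 2 * π * n)⁻¹ - c) + c * f x := by ring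
  have h_pv : pvInt (fun x ↦ f x / (x - u + 2 * π * n)) u =
      ∫ x in Ioo (-π) π, f x * ((x - u + 2 * π * n)⁻¹ - c) := by
    simp only [h_split]
    rw [((hasPV_of_integrableOn h_osc u).add
      ((hasPV_of_integrableOn hf u).const_mul c)).pvInt_eq, h_mean, mul_zero, add_zero]
  rw [h_pv, ← integral_const_mul]
  exact norm_integral_le_of_norm_le (hf.norm.const_mul _)
    (ae_restrict_of_forall_mem measurableSet_Ioo h_bound)

lemma periodicHilbert_congr (h : EqOn f g (Ioo (-π) π)) (u : ℝ) :
    periodicHilbert f u = periodicHilbert g u := by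
  unfold periodicHilbert
  congr! 3 with n
  exact pvInt_congr (fun x hx ↦ by simp only [h hx]) u

lemma abs_periodicHilbert_sub_pvInt_le (hf : IntegrableOn f (Ioo (-π) π))
    (h_mean : ∫ x in Ioo (-π) π, f x = 0) (hu : |u| ≤ π / 2) :
    |periodicHilbert f u - 1 / π * pvInt (fun x ↦ f x / (x - u)) u| ≤
      1 / π * ((∑' n : ℤ, 1 / (n : ℝ) ^ 2) * ∫ x in Ioo (-π) π, |f x|) := by
  have h_weights := (summable_one_div_int_pow.2 one_lt_two).mul_right (∫ x in Ioo (-π) π, |f x|)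
  have h_far (n : ℤ) : ‖if n = 0 then 0 else pvInt (fun x ↦ f x / (x - u + 2 * π * n)) u‖ ≤
      1 / (n : ℝ) ^ 2 * ∫ x in Ioo (-π) π, |f x| := by
    split_ifs with hn
    · simp [hn]
    · exact abs_pvInt_div_shift_le hf h_mean hu hn
  have h_summable : Summable fun n : ℤ ↦ pvInt (fun x ↦ f x / (x - u + 2 * π * n)) u :=
    h_weights.of_norm_bounded_eventually <| (finite_singleton 0).subset fun n hn ↦ by
      by_contra h0
      exact hn (abs_pvInt_div_shift_le hf h_mean hu h0)
  rw [periodicHilbert, h_summable.tsum_eq_add_tsum_ite 0, Int.cast_zero]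
  simp only [mul_zero, add_zero]
  rw [← mul_sub, add_sub_cancel_left, abs_mul, abs_of_pos (by positivity), ← tsum_mul_right]
  gcongr
  exact tsum_of_norm_bounded h_weights.hasSum h_far

end PrincipalValue

lemma deriv_perExt (g : ℝ → ℝ) : EqOn (deriv (perExt g)) (deriv g) (Ioo (-π) π) := fun x hx ↦ by
  refine EventuallyEq.deriv_eq ?_
  filter_upwards [Ioo_mem_nhds hx.1 hx.2] with y hy
  have h_floor : ⌊(y + π) / (2 * π)⌋ = 0 := by
    rw [Int.floor_eq_zero_iff]
    exact ⟨div_nonneg (by linarith [hy.1]) two_pi_pos.le,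
      (div_lt_one two_pi_pos).2 (by linarith [hy.2])⟩
  rw [perExt, h_floor, Int.cast_zero, mul_zero, sub_zero]

lemma Kinf_perExt (g : ℝ → ℝ) (u : ℝ) : Kinf (perExt g) u = -periodicHilbert (deriv g) u := by
  rw [Kinf, periodicHilbert_congr (deriv_perExt g)]

/-! ### The derivative of a power of the absolute value -/

section AbsRpow

variable {a u : ℝ}

lemma even_abs_rpow (a : ℝ) : (fun x : ℝ ↦ |x| ^ a).Even := fun x ↦ by simp only [abs_neg]

lemma odd_deriv_abs_rpow (a : ℝ) : (deriv fun x : ℝ ↦ |x| ^ a).Odd :=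
  odd_deriv_of_even (even_abs_rpow a)

lemma deriv_abs_rpow (a x : ℝ) :
    deriv (fun x : ℝ ↦ |x| ^ a) x = a * |x| ^ (a - 2) * x := by
  rcases eq_or_ne x 0 with rfl | hx
  · rw [mul_zero, ← self_eq_neg]
    simpa only [neg_zero] using odd_deriv_abs_rpow a 0
  have h_abs : 0 < |x| := abs_pos.2 hx
  rw [((hasDerivAt_abs hx).rpow_const (.inl h_abs.ne')).deriv]
  have h_rpow : |x| ^ (a - 1) = |x| ^ (a - 2) * |x| := by
    rw [← rpow_add_one h_abs.ne']
    ring_nf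
  rw [h_rpow]
  linear_combination a * |x| ^ (a - 2) * sign_mul_abs x

lemma abs_deriv_abs_rpow (ha : 0 ≤ a) (hu : u ≠ 0) :
    |deriv (fun x : ℝ ↦ |x| ^ a) u| = a * |u| ^ (a - 1) := by
  rw [deriv_abs_rpow, abs_mul, abs_mul, abs_of_nonneg ha, abs_rpow_of_nonneg (abs_nonneg u),
    abs_abs, mul_assoc, ← rpow_add_one (abs_pos.2 hu).ne']
  ring_nf

lemma mul_deriv_abs_rpow (ha : a ≠ 0) (x : ℝ) :
    x * deriv (fun x : ℝ ↦ |x| ^ a) x = a * |x| ^ a := by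
  rcases eq_or_ne x 0 with rfl | hx
  · rw [zero_mul, abs_zero, zero_rpow ha, mul_zero]
  have h_rpow : |x| ^ a = |x| ^ (a - 2) * x ^ 2 := by
    rw [← sq_abs, ← rpow_add_natCast (abs_pos.2 hx).ne']
    norm_num
  rw [deriv_abs_rpow, h_rpow]
  ring

lemma differentiableAt_deriv_abs_rpow (hu : u ≠ 0) :
    DifferentiableAt ℝ (deriv fun x : ℝ ↦ |x| ^ a) u := by
  rw [funext (deriv_abs_rpow a)]
  exact (((differentiableAt_abs hu).rpow_const (.inl (abs_pos.2 hu).ne')).const_mul a).mul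
    differentiableAt_fun_id

lemma integrableOn_deriv_abs_rpow (ha : 0 < a) (r : ℝ) :
    IntegrableOn (deriv fun x : ℝ ↦ |x| ^ a) (Ioo (-r) r) := by
  rcases lt_or_ge r 0 with hr | hr
  · simp [hr.le]
  have h_bound : IntervalIntegrable (fun x : ℝ ↦ a * |x| ^ (a - 1)) volume (-r) r := by
    refine .const_mul (intervalIntegrable_of_even (fun x ↦ by rw [abs_neg]) fun x hx ↦ ?_) a
    have h_exp : -1 < a - 1 := by linarith
    refine (intervalIntegral.intervalIntegrable_rpow' h_exp).congr fun t ht ↦ ?_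
    rw [uIoc_of_le hx.le] at ht
    rw [abs_of_pos ht.1]
  rw [intervalIntegrable_iff_integrableOn_Ioo_of_le (by linarith)] at h_bound
  refine h_bound.mono' (measurable_deriv _).aestronglyMeasurable ?_
  filter_upwards [ae_restrict_of_ae (Measure.ae_ne volume 0)] with x hx
  exact (abs_deriv_abs_rpow ha.le hx).le

lemma slope_add_slope_neg_deriv_abs_rpow {x : ℝ} (ha : a ≠ 0) (hu : u ≠ 0) (hx : 0 < x)
    (hxu : x ≠ |u|) :
    slope (deriv fun x : ℝ ↦ |x| ^ a) u x + slope (deriv fun x : ℝ ↦ |x| ^ a) u (-x) =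
      2 * a * |u| ^ (a - 2) * foldedKernel a (x / |u|) := by
  have hu' : 0 < |u| := abs_pos.2 hu
  have h_sq : x ^ 2 - |u| ^ 2 ≠ 0 :=
    sub_ne_zero.2 fun h ↦ hxu ((sq_eq_sq₀ hx.le hu'.le).1 h)
  rw [slope_add_slope_neg_of_odd (odd_deriv_abs_rpow a) (by rwa [abs_of_pos hx]),
    mul_deriv_abs_rpow ha, mul_deriv_abs_rpow ha, foldedKernel, div_rpow hx.le hu'.le,
    abs_of_pos hx, rpow_sub hu', rpow_two, ← sq_abs u]
  have := rpow_pos_of_pos hu' a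
  field_simp

lemma integral_slope_deriv_abs_rpow (ha : 0 < a) (hu : u ≠ 0) :
    ∫ x in Ioo (-π) π, slope (deriv fun x : ℝ ↦ |x| ^ a) u x =
      2 * a * |u| ^ (a - 1) * ∫ t in 0..(π / |u|), foldedKernel a t := by
  have hu' : 0 < |u| := abs_pos.2 hu
  have h_int := integrableOn_slope measure_Ioo_lt_top.ne (integrableOn_deriv_abs_rpow ha π)
    (differentiableAt_deriv_abs_rpow hu)
  calc ∫ x in Ioo (-π) π, slope (deriv fun x : ℝ ↦ |x| ^ a) u x
      = ∫ x in 0..π, 2 * a * |u| ^ (a - 2) * foldedKernel a (x / |u|) := by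
        rw [integral_Ioo_neg_eq_integral_add_comp_neg pi_pos.le h_int]
        refine intervalIntegral.integral_congr_ae ?_
        filter_upwards [Measure.ae_ne volume |u|] with x hxu hx
        rw [uIoc_of_le pi_pos.le] at hx
        exact slope_add_slope_neg_deriv_abs_rpow ha.ne' hu hx.1 hxu
    _ = 2 * a * |u| ^ (a - 1) * ∫ t in 0..(π / |u|), foldedKernel a t := by
        rw [intervalIntegral.integral_const_mul,
          intervalIntegral.integral_comp_div _ hu'.ne', zero_div, smul_eq_mul, ← mul_assoc,
          mul_assoc (2 * a), ← rpow_add_one hu'.ne']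
        ring_nf

lemma abs_integral_slope_deriv_abs_rpow_sub_le (ha : a ∈ Ioo 0 1) (hu : u ≠ 0) (huπ : |u| ≤ π) :
    |(∫ x in Ioo (-π) π, slope (deriv fun x : ℝ ↦ |x| ^ a) u x) -
      π * (a * tan (π * (a / 2)) * |u| ^ (a - 1))| ≤ 2 * a * π ^ (a - 1) / (1 - a) := by
  have hu' : 0 < |u| := abs_pos.2 hu
  have ha0 := ha.1
  have h_cancel : |u| ^ (a - 1) * (π / |u|) ^ (a - 1) = π ^ (a - 1) := by
    rw [← mul_rpow hu'.le (by positivity), mul_div_cancel₀ _ hu'.ne']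
  calc _ = 2 * a * |u| ^ (a - 1) *
        |(∫ t in 0..(π / |u|), foldedKernel a t) - π / 2 * tan (π * (a / 2))| := by
        rw [integral_slope_deriv_abs_rpow ha.1 hu, ← abs_of_pos (a := 2 * a * |u| ^ (a - 1))
          (by positivity), ← abs_mul, abs_of_pos (a := 2 * a * |u| ^ (a - 1)) (by positivity)]
        ring_nf
    _ ≤ 2 * a * |u| ^ (a - 1) * ((π / |u|) ^ (a - 1) / (1 - a)) := by
        gcongr
        exact abs_integral_foldedKernel_sub_le ha ((one_le_div hu').2 huπ)
    _ = 2 * a * π ^ (a - 1) / (1 - a) := by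
        rw [← h_cancel]
        ring

lemma abs_log_sub_div_add_le {p u : ℝ} (hu : |u| < p) :
    |log ((p - u) / (p + u))| ≤ 2 * |u| / (p - |u|) := by
  have hp : 0 < p - |u| := sub_pos.2 hu
  have h_log_le {v : ℝ} (hv : |v| = |u|) : log ((p - v) / (p + v)) ≤ 2 * |u| / (p - |u|) := by
    obtain ⟨h_neg_le, h_le⟩ := abs_le.1 hv.le
    calc log ((p - v) / (p + v)) ≤ (p - v) / (p + v) - 1 :=
          log_le_sub_one_of_pos (div_pos (by linarith) (by linarith))
      _ = -(2 * v) / (p + v) := by rw [div_sub_one (by linarith)]; ring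
      _ ≤ 2 * |u| / (p - |u|) := div_le_div₀ (by positivity) (by linarith) hp (by linarith)
  refine abs_le'.2 ⟨h_log_le rfl, ?_⟩
  rw [← log_inv, inv_div]
  simpa only [sub_neg_eq_add, ← sub_eq_add_neg] using h_log_le (abs_neg u)

lemma abs_deriv_abs_rpow_mul_log_le (ha : 0 < a) (hu : u ≠ 0) (huπ : |u| ≤ π / 2) :
    |deriv (fun x : ℝ ↦ |x| ^ a) u * log ((π - u) / (π + u))| ≤ 4 * a * π ^ (a - 1) := by
  have hu' : 0 < |u| := abs_pos.2 hu
  have hπ := pi_pos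
  calc |deriv (fun x : ℝ ↦ |x| ^ a) u * log ((π - u) / (π + u))|
      ≤ a * |u| ^ (a - 1) * (2 * |u| / (π - |u|)) := by
        rw [abs_mul, abs_deriv_abs_rpow ha.le hu]
        gcongr
        exact abs_log_sub_div_add_le (by linarith)
    _ ≤ a * |u| ^ (a - 1) * (2 * |u| / (π / 2)) := by
        gcongr
        linarith
    _ = 4 * a * |u| ^ a / π := by
        rw [rpow_sub_one hu'.ne']
        field_simp
        ring
    _ ≤ 4 * a * π ^ a / π := by
        gcongr
        linarith
    _ = 4 * a * π ^ (a - 1) := by rw [rpow_sub_one hπ.ne', mul_div_assoc]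

lemma abs_pvInt_deriv_abs_rpow_sub_le (ha : a ∈ Ioo 0 1) (hu : u ≠ 0) (huπ : |u| ≤ π / 2) :
    |pvInt (fun x ↦ deriv (fun x : ℝ ↦ |x| ^ a) x / (x - u)) u -
      π * (a * tan (π * (a / 2)) * |u| ^ (a - 1))| ≤
      2 * a * π ^ (a - 1) / (1 - a) + 4 * a * π ^ (a - 1) := by
  have huπ' : |u| < π := by linarith [pi_pos]
  rw [pvInt_div_sub (integrableOn_deriv_abs_rpow ha.1 π) (differentiableAt_deriv_abs_rpow hu) huπ',
    add_sub_right_comm]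
  exact (abs_add_le _ _).trans <| add_le_add
    (abs_integral_slope_deriv_abs_rpow_sub_le ha hu huπ'.le)
    (abs_deriv_abs_rpow_mul_log_le ha.1 hu huπ)

lemma setIntegral_deriv_abs_rpow_eq_zero (a : ℝ) :
    ∫ x in Ioo (-π) π, deriv (fun x : ℝ ↦ |x| ^ a) x = 0 := by
  rw [← integral_Ioc_eq_integral_Ioo, ← intervalIntegral.integral_of_le (by linarith [pi_pos])]
  exact intervalIntegral_neg_eq_zero_of_odd (odd_deriv_abs_rpow a) π

lemma abs_periodicHilbert_deriv_abs_rpow_sub_le (ha : a ∈ Ioo 0 1) (hu : u ≠ 0)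
    (huπ : |u| ≤ π / 2) :
    |periodicHilbert (deriv fun x : ℝ ↦ |x| ^ a) u - a * tan (π * (a / 2)) * |u| ^ (a - 1)| ≤
      1 / π * ((∑' n : ℤ, 1 / (n : ℝ) ^ 2) * ∫ x in Ioo (-π) π, |deriv (fun x : ℝ ↦ |x| ^ a) x|) +
        1 / π * (2 * a * π ^ (a - 1) / (1 - a) + 4 * a * π ^ (a - 1)) := by
  have h_main : a * tan (π * (a / 2)) * |u| ^ (a - 1) =
      1 / π * (π * (a * tan (π * (a / 2)) * |u| ^ (a - 1))) := by
    rw [one_div, inv_mul_cancel_left₀ pi_ne_zero]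
  refine (abs_sub_le _ (1 / π * pvInt (fun x ↦ deriv (fun x : ℝ ↦ |x| ^ a) x / (x - u)) u) _).trans
    (add_le_add (abs_periodicHilbert_sub_pvInt_le (integrableOn_deriv_abs_rpow ha.1 π)
      (setIntegral_deriv_abs_rpow_eq_zero a) huπ) ?_)
  rw [h_main, ← mul_sub, abs_mul, abs_of_pos (one_div_pos.2 pi_pos)]
  gcongr
  exact abs_pvInt_deriv_abs_rpow_sub_le ha hu huπ

end AbsRpow

/-- For `β ∈ (0,1/2)`, `K_∞ |u|^(2β) = -2β tan(πβ) |u|^(2β-1) + O(1)` as `u → 0`. -/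
theorem Kinf_abs_rpow_two_beta_small (β : ℝ) (hβ : β ∈ Set.Ioo (0:ℝ) (1/2)) :
    ∃ C : ℝ, 0 < C ∧ ∃ δ ∈ Set.Ioo (0:ℝ) π, ∀ u : ℝ, 0 < |u| → |u| < δ →
      |Kinf (perExt (fun x => |x| ^ (2*β))) u + 2*β * Real.tan (π * β) * |u| ^ (2*β - 1)| ≤ C := by
  obtain ⟨a, rfl⟩ : ∃ a, β = a / 2 := ⟨2 * β, by ring⟩
  have ha : a ∈ Ioo 0 1 := ⟨by linarith [hβ.1], by linarith [hβ.2]⟩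
  have h_bound {u : ℝ} := abs_periodicHilbert_deriv_abs_rpow_sub_le (u := u) ha
  set C := 1 / π * ((∑' n : ℤ, 1 / (n : ℝ) ^ 2) *
    ∫ x in Ioo (-π) π, |deriv (fun x : ℝ ↦ |x| ^ a) x|) +
      1 / π * (2 * a * π ^ (a - 1) / (1 - a) + 4 * a * π ^ (a - 1))
  refine ⟨max C 1, by positivity, π / 2, ⟨pi_div_two_pos, div_two_lt_of_pos pi_pos⟩,
    fun u hu huδ ↦ le_max_of_le_left ?_⟩
  rw [mul_div_cancel₀ a two_ne_zero, Kinf_perExt, neg_add_eq_sub, abs_sub_comm]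
  exact h_bound (abs_pos.1 hu) huδ.le
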